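/- arXiv:1208.6375 — 5 statements merged into one kernel-verified Lean document; each statement's English description precedes it below -/
import Mathlib

section
/- (a) For every v ∈ Δ, the probability vector π(v) belongs to Δ; in particular π_i(v) ≤ 3/4 whenever A_{i,i} = 0. (b) Consequently, if v : [0,∞) → {x ∈ ℝ^N : Σ_i x_i = 1} is a differentiable curve with v'(t) = F(v(t)) for all t ≥ 0 and v(0) ∈ Δ, then v(t) ∈ Δ for all t ≥ 0. -/
/-!
**Part (a).** With `x = v^α` and `A i i = 0`, the quadratic form `H = ∑ x_j (A x)_j` contains the
term `x_i (A x)_i` twice: once as the row `i`, and once, by symmetry, as the column `i`, and the two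
overlap only in the vanishing diagonal entry. Hence `π_i ≤ 1/2 ≤ 3/4`
(`two_mul_row_le_Hfun`). Positivity of `H` on the simplex (`Hfun_pos`) holds because either two
coordinates of `v` are positive, or `v` is a vertex, which the constraint `v_i ≤ 3/4` only allows
when `A i i > 0`.

**Part (b).** Coordinatewise, `v_i` and `3/4 - v_i` both solve `f' = g - f` with `g ≥ 0` by part (a),
so `e^t f` is nondecreasing and `f` stays nonnegative (`nonneg_of_relaxation`).
-/

open Filter Set Matrix

/-- `H(v) = ⟨A v^α, v^α⟩`. -/
noncomputable def Hfun {N : ℕ} (A : Matrix (Fin N) (Fin N) ℝ) (α : ℝ)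
    (v : Fin N → ℝ) : ℝ :=
  ∑ i, ∑ j, A i j * v i ^ α * v j ^ α

/-- `π_i(v) = v_i^α (A v^α)_i / H(v)`. -/
noncomputable def piFun {N : ℕ} (A : Matrix (Fin N) (Fin N) ℝ) (α : ℝ)
    (v : Fin N → ℝ) : Fin N → ℝ :=
  fun i => v i ^ α * (∑ j, A i j * v j ^ α) / Hfun A α v

/-- The vector field `F(v) = -v + π(v)`. -/
noncomputable def Ffield {N : ℕ} (A : Matrix (Fin N) (Fin N) ℝ) (α : ℝ)
    (v : Fin N → ℝ) : Fin N → ℝ :=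
  fun i => piFun A α v i - v i

/-- The reduced simplex `Δ`. -/
def simplexD {N : ℕ} (A : Matrix (Fin N) (Fin N) ℝ) : Set (Fin N → ℝ) :=
  {v | (∀ i, 0 ≤ v i) ∧ (∑ i, v i = 1) ∧ ∀ i, A i i = 0 → v i ≤ 3 / 4}

lemma Hfun_eq {N : ℕ} (A : Matrix (Fin N) (Fin N) ℝ) (α : ℝ) (v : Fin N → ℝ) :
    Hfun A α v = ∑ i, v i ^ α * ∑ j, A i j * v j ^ α := by
  unfold Hfun
  refine Finset.sum_congr rfl fun i _ => ?_
  rw [Finset.mul_sum]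
  exact Finset.sum_congr rfl fun j _ => by ring

lemma Hfun_pos {N : ℕ} {α : ℝ} (A : Matrix (Fin N) (Fin N) ℝ)
    (hnonneg : ∀ i j, 0 ≤ A i j) (hoffdiag : ∀ i j, i ≠ j → 0 < A i j)
    {v : Fin N → ℝ} (hv : v ∈ simplexD A) : 0 < Hfun A α v := by
  obtain ⟨h0, h1, h2⟩ := hv
  have hterm : ∀ i j, 0 ≤ A i j * v i ^ α * v j ^ α := fun i j =>
    mul_nonneg (mul_nonneg (hnonneg i j) (Real.rpow_nonneg (h0 i) _)) (Real.rpow_nonneg (h0 j) _)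
  have key : ∀ i j, 0 < A i j → 0 < v i → 0 < v j → 0 < Hfun A α v := by
    intro i j hA hi hj
    have hpos : 0 < A i j * v i ^ α * v j ^ α :=
      mul_pos (mul_pos hA (Real.rpow_pos_of_pos hi _)) (Real.rpow_pos_of_pos hj _)
    refine Finset.sum_pos' (fun i _ => Finset.sum_nonneg fun j _ => hterm i j)
      ⟨i, Finset.mem_univ _, ?_⟩
    exact Finset.sum_pos' (fun j _ => hterm i j) ⟨j, Finset.mem_univ _, hpos⟩
  obtain ⟨i, -, hi⟩ : ∃ i ∈ Finset.univ, 0 < v i := by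
    by_contra! h
    have := Finset.sum_nonpos h
    linarith
  by_cases hA : A i i = 0
  · obtain ⟨j, hji, hj⟩ : ∃ j, j ≠ i ∧ 0 < v j := by
      by_contra! h
      have hs : ∑ j, v j = v i :=
        Finset.sum_eq_single i (fun j _ hji => le_antisymm (h j hji) (h0 j)) (by simp)
      have := h2 i hA
      linarith
    exact key i j (hoffdiag i j hji.symm) hi hj
  · exact key i i (lt_of_le_of_ne (hnonneg i i) (Ne.symm hA)) hi hi

/-- When `A i i = 0`, row `i` and column `i` contribute the same amount to `H` without overlap. -/
lemma two_mul_row_le_Hfun {N : ℕ} {α : ℝ} (A : Matrix (Fin N) (Fin N) ℝ)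
    (hsymm : ∀ i j, A i j = A j i) (hnonneg : ∀ i j, 0 ≤ A i j)
    {v : Fin N → ℝ} (h0 : ∀ i, 0 ≤ v i) {i : Fin N} (hA : A i i = 0) :
    2 * (v i ^ α * ∑ j, A i j * v j ^ α) ≤ Hfun A α v := by
  have hx : ∀ j, 0 ≤ v j ^ α := fun j => Real.rpow_nonneg (h0 j) _
  rw [Hfun_eq, two_mul, ← Finset.add_sum_erase _ (fun k => v k ^ α * ∑ j, A k j * v j ^ α)
    (Finset.mem_univ i)]
  refine add_le_add_right ?_ _
  rw [← Finset.add_sum_erase _ (fun j => A i j * v j ^ α) (Finset.mem_univ i), hA, zero_mul,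
    zero_add, Finset.mul_sum]
  refine Finset.sum_le_sum fun j _ => ?_
  have hle : A j i * v i ^ α ≤ ∑ k, A j k * v k ^ α :=
    Finset.single_le_sum (f := fun k => A j k * v k ^ α)
      (fun k _ => mul_nonneg (hnonneg j k) (hx k)) (Finset.mem_univ i)
  calc v i ^ α * (A i j * v j ^ α) = v j ^ α * (A j i * v i ^ α) := by rw [hsymm i j]; ring
    _ ≤ _ := mul_le_mul_of_nonneg_left hle (hx j)

lemma piFun_mem_simplexD {N : ℕ} {α : ℝ} (A : Matrix (Fin N) (Fin N) ℝ)
    (hsymm : ∀ i j, A i j = A j i) (hnonneg : ∀ i j, 0 ≤ A i j)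
    (hoffdiag : ∀ i j, i ≠ j → 0 < A i j) {v : Fin N → ℝ} (hv : v ∈ simplexD A) :
    piFun A α v ∈ simplexD A := by
  have hH : 0 < Hfun A α v := Hfun_pos A hnonneg hoffdiag hv
  have hx : ∀ j, 0 ≤ v j ^ α := fun j => Real.rpow_nonneg (hv.1 j) _
  refine ⟨fun i => ?_, ?_, fun i hA => ?_⟩
  · exact div_nonneg (mul_nonneg (hx i)
      (Finset.sum_nonneg fun j _ => mul_nonneg (hnonneg i j) (hx j))) hH.le
  · simp only [piFun]
    rw [← Finset.sum_div, ← Hfun_eq, div_self hH.ne']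
  · have h := two_mul_row_le_Hfun (α := α) A hsymm hnonneg hv.1 hA
    simp only [piFun]
    rw [div_le_iff₀ hH]
    linarith

/-- A solution of `f' = g - f` with `g ≥ 0` that starts nonnegative stays nonnegative, because
`e^t f` is nondecreasing. -/
lemma nonneg_of_relaxation {f g : ℝ → ℝ}
    (hf : ∀ t, 0 ≤ t → HasDerivWithinAt f (g t - f t) (Set.Ici 0) t)
    (hg : ∀ t, 0 ≤ t → 0 ≤ g t) (hf0 : 0 ≤ f 0) {t : ℝ} (ht : 0 ≤ t) : 0 ≤ f t := by
  have hder : ∀ s, 0 ≤ s →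
      HasDerivWithinAt (fun s => Real.exp s * f s) (Real.exp s * g s) (Set.Ici 0) s := by
    intro s hs
    refine ((Real.hasDerivAt_exp s).hasDerivWithinAt.mul (hf s hs)).congr_deriv ?_
    ring
  have hmono : MonotoneOn (fun s => Real.exp s * f s) (Set.Ici 0) := by
    refine monotoneOn_of_hasDerivWithinAt_nonneg (f' := fun s => Real.exp s * g s) (convex_Ici 0)
      (fun s hs => (hder s hs).continuousWithinAt) (fun s hs => ?_) (fun s hs => ?_)
    · exact (hder s (interior_subset hs)).mono interior_subset
    · exact mul_nonneg (Real.exp_pos s).le (hg s (interior_subset hs))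
  have h := hmono (Set.mem_Ici.2 le_rfl) (Set.mem_Ici.2 ht) ht
  simp only [Real.exp_zero, one_mul] at h
  exact nonneg_of_mul_nonneg_right (hf0.trans h) (Real.exp_pos t)

/-- (a) `π` maps `Δ` into `Δ` (in particular `π_i(v) ≤ 3/4` whenever
`A_{ii} = 0`); consequently (b) any differentiable curve in the hyperplane `{∑ x_i = 1}`
solving `v' = F(v)` (with `F` extended via the nearest-point retraction `ι` onto `Δ`)
which starts in `Δ` stays in `Δ` for all `t ≥ 0`. -/
theorem piFun_mem_simplex_and_flow_invariance
    {N : ℕ} (hN : 2 ≤ N) {α : ℝ} (hα : 1 < α)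
    (A : Matrix (Fin N) (Fin N) ℝ)
    (hsymm : ∀ i j, A i j = A j i)
    (hnonneg : ∀ i j, 0 ≤ A i j)
    (hoffdiag : ∀ i j, i ≠ j → 0 < A i j)
    (hrow : ∀ i i', ∑ j, A i j = ∑ j, A i' j)
    (ι : (Fin N → ℝ) → (Fin N → ℝ))
    (hι : ∀ x : Fin N → ℝ, (∑ i, x i) = 1 →
      ι x ∈ simplexD A ∧
        ∀ y ∈ simplexD A, ∑ i, (ι x i - x i) ^ 2 ≤ ∑ i, (y i - x i) ^ 2) :
    (∀ v ∈ simplexD A, piFun A α v ∈ simplexD A) ∧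
    (∀ v : ℝ → Fin N → ℝ,
      (∀ t : ℝ, 0 ≤ t → (∑ i, v t i) = 1) →
      (∀ t : ℝ, 0 ≤ t →
        HasDerivWithinAt v (fun i => piFun A α (ι (v t)) i - v t i) (Set.Ici 0) t) →
      v 0 ∈ simplexD A → ∀ t : ℝ, 0 ≤ t → v t ∈ simplexD A) := by
  have ha : ∀ v ∈ simplexD A, piFun A α v ∈ simplexD A := fun v hv =>
    piFun_mem_simplexD A hsymm hnonneg hoffdiag hv
  refine ⟨ha, fun v hsum hv hv0 t ht => ?_⟩
  have hπ : ∀ s, 0 ≤ s → piFun A α (ι (v s)) ∈ simplexD A := fun s hs =>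
    ha _ (hι _ (hsum s hs)).1
  have hcoord : ∀ i s, 0 ≤ s →
      HasDerivWithinAt (fun s => v s i) (piFun A α (ι (v s)) i - v s i) (Set.Ici 0) s :=
    fun i s hs => hasDerivWithinAt_pi.1 (hv s hs) i
  refine ⟨fun i => ?_, hsum t ht, fun i hA => ?_⟩
  · exact nonneg_of_relaxation (hcoord i) (fun s hs => (hπ s hs).1 i) (hv0.1 i) ht
  · have h := nonneg_of_relaxation (f := fun s => 3 / 4 - v s i)
      (g := fun s => 3 / 4 - piFun A α (ι (v s)) i)
      (fun s hs => ((hcoord i s hs).const_sub (3 / 4)).congr_deriv (by ring))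
      (fun s hs => sub_nonneg.2 ((hπ s hs).2.2 i hA)) (sub_nonneg.2 (hv0.2.2 i hA)) ht
    exact sub_nonneg.1 h
end

section
/- The function H is a strict Lyapunov function for F on Δ: for every v ∈ Δ one has ⟨∇H(v), F(v)⟩ = (2α/H(v)) ( Σ_i v_i (v_i^{α-1} (A v^α)_i)^2 − (Σ_i v_i · v_i^{α-1} (A v^α)_i)^2 ) ≥ 0, and ⟨∇H(v), F(v)⟩ > 0 for every v ∈ Δ \ C, i.e. equality holds if and only if v is an equilibrium. -/
/-!
Put `x_i = v_i^(α-1) (A v^α)_i`, the payoff of coordinate `i`. By symmetry of `A` the partial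
derivative `∂_i H(v)` is `2α x_i`, while `H(v) = ∑ v_i x_i` is the mean of `x` under the probability
vector `v`, and `F_i(v) = v_i (x_i - H) / H`. Hence `⟨∇H, F⟩ = (2α/H) ∑ v_i x_i (x_i - H)`, which is
`2α/H` times the variance of `x` under `v`. As `H > 0` on `Δ` (`Hfun_pos`), this is nonnegative, and
it vanishes exactly when `v_i (x_i - H) = 0` for all `i`, that is, when `F(v) = 0`.
-/

open Filter Set Matrix

/-- Partial derivatives of `H`. Since `α ≥ 1`, the power `x ↦ x^α` is differentiable at `0` too, so
the formula holds at boundary points of the simplex. -/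
lemma lineDeriv_Hfun {N : ℕ} {α : ℝ} (hα : 1 < α) (A : Matrix (Fin N) (Fin N) ℝ)
    (hsymm : ∀ i j, A i j = A j i) (v : Fin N → ℝ) (i : Fin N) :
    lineDeriv ℝ (Hfun A α) v (Pi.single i 1) =
      2 * α * (v i ^ (α - 1) * ∑ j, A i j * v j ^ α) := by
  set e : Fin N → ℝ := Pi.single i 1 with he
  have hpow : ∀ k, HasDerivAt (fun t : ℝ => (v k + t * e k) ^ α)
      (e k * (α * v k ^ (α - 1))) 0 := by
    intro k
    have h1 : HasDerivAt (fun t : ℝ => v k + t * e k) (e k) 0 := by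
      simpa using ((hasDerivAt_id (0 : ℝ)).mul_const (e k)).const_add (v k)
    have h2 := h1.rpow_const (p := α) (Or.inr hα.le)
    simpa [mul_assoc] using h2
  have hsum : HasDerivAt (fun t : ℝ => Hfun A α (v + t • e))
      (∑ k, ∑ j, (A k j * (e k * (α * v k ^ (α - 1))) * v j ^ α +
        A k j * v k ^ α * (e j * (α * v j ^ (α - 1))))) 0 := by
    unfold Hfun
    refine HasDerivAt.fun_sum fun k _ => HasDerivAt.fun_sum fun j _ => ?_
    simpa using ((hpow k).const_mul (A k j)).fun_mul (hpow j)
  have hline : HasLineDerivAt ℝ (Hfun A α) _ v e := hsum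
  rw [hline.lineDeriv]
  simp only [Finset.sum_add_distrib]
  -- By symmetry of `A`, the two factors of each product contribute equally.
  have hswap : ∑ k, ∑ j, A k j * v k ^ α * (e j * (α * v j ^ (α - 1))) =
      ∑ k, ∑ j, A k j * (e k * (α * v k ^ (α - 1))) * v j ^ α := by
    rw [Finset.sum_comm]
    refine Finset.sum_congr rfl fun k _ => Finset.sum_congr rfl fun j _ => ?_
    rw [hsymm j k]
    ring
  have hval : ∑ k, ∑ j, A k j * (e k * (α * v k ^ (α - 1))) * v j ^ α =
      α * (v i ^ (α - 1) * ∑ j, A i j * v j ^ α) := by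
    rw [Finset.sum_eq_single i]
    · simp only [he, Pi.single_eq_same, Finset.mul_sum]
      exact Finset.sum_congr rfl fun j _ => by ring
    · intro k _ hk
      simp [he, Pi.single_eq_of_ne hk]
    · simp
  rw [hswap, hval]
  ring

/-- `H` is a strict Lyapunov function for `F` on `Δ`:
`⟨∇H(v), F(v)⟩ = (2α/H(v)) (∑_i v_i (v_i^{α-1}(Av^α)_i)² − (∑_i v_i · v_i^{α-1}(Av^α)_i)²) ≥ 0`,
with strict inequality exactly when `v` is not an equilibrium. -/
theorem Hfun_strict_lyapunov
    {N : ℕ} (hN : 2 ≤ N) {α : ℝ} (hα : 1 < α)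
    (A : Matrix (Fin N) (Fin N) ℝ)
    (hsymm : ∀ i j, A i j = A j i)
    (hnonneg : ∀ i j, 0 ≤ A i j)
    (hoffdiag : ∀ i j, i ≠ j → 0 < A i j)
    (hrow : ∀ i i', ∑ j, A i j = ∑ j, A i' j) :
    ∀ v ∈ simplexD A,
      (∑ i, lineDeriv ℝ (Hfun A α) v (Pi.single i 1) * Ffield A α v i) =
        (2 * α / Hfun A α v) *
          ((∑ i, v i * (v i ^ (α - 1) * ∑ j, A i j * v j ^ α) ^ 2) -
            (∑ i, v i * (v i ^ (α - 1) * ∑ j, A i j * v j ^ α)) ^ 2) ∧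
      0 ≤ ∑ i, lineDeriv ℝ (Hfun A α) v (Pi.single i 1) * Ffield A α v i ∧
      (0 < ∑ i, lineDeriv ℝ (Hfun A α) v (Pi.single i 1) * Ffield A α v i ↔
        Ffield A α v ≠ 0) := by
  intro v hv
  have hH := Hfun_pos (α := α) A hnonneg hoffdiag hv
  obtain ⟨h0, h1, -⟩ := hv
  have hpow : ∀ i, v i ^ α = v i * v i ^ (α - 1) := by
    intro i
    rw [← Real.rpow_one_add' (h0 i) (by linarith)]
    congr 1
    ring
  have hmean : Hfun A α v = ∑ i, v i * (v i ^ (α - 1) * ∑ j, A i j * v j ^ α) := by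
    unfold Hfun
    refine Finset.sum_congr rfl fun i _ => ?_
    rw [← mul_assoc, ← hpow, Finset.mul_sum]
    exact Finset.sum_congr rfl fun j _ => by ring
  have hF : ∀ i, Ffield A α v i =
      v i * (v i ^ (α - 1) * (∑ j, A i j * v j ^ α) - Hfun A α v) / Hfun A α v := by
    intro i
    have : Ffield A α v i = v i ^ α * (∑ j, A i j * v j ^ α) / Hfun A α v - v i := rfl
    rw [this, hpow i]
    field_simp
  simp only [lineDeriv_Hfun hα A hsymm]
  generalize hh : Hfun A α v = h at *
  generalize hx : (fun i => v i ^ (α - 1) * ∑ j, A i j * v j ^ α) = x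
  have hx' : ∀ i, v i ^ (α - 1) * ∑ j, A i j * v j ^ α = x i := fun i => congrFun hx i
  simp only [hx'] at *
  have hvar : (∑ i, v i * x i ^ 2) - (∑ i, v i * x i) ^ 2 = ∑ i, v i * (x i - h) ^ 2 := by
    have : ∑ i, v i * (x i - h) ^ 2 =
        ∑ i, v i * x i ^ 2 - 2 * h * ∑ i, v i * x i + h ^ 2 * ∑ i, v i := by
      simp only [Finset.mul_sum, ← Finset.sum_sub_distrib, ← Finset.sum_add_distrib]
      exact Finset.sum_congr rfl fun i _ => by ring
    rw [this, h1, ← hmean]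
    ring
  have hid : ∑ i, 2 * α * x i * Ffield A α v i =
      2 * α / h * ((∑ i, v i * x i ^ 2) - (∑ i, v i * x i) ^ 2) := by
    have : ∑ i, 2 * α * x i * Ffield A α v i =
        2 * α / h * ((∑ i, v i * x i ^ 2) - h * ∑ i, v i * x i) := by
      simp only [hF, Finset.mul_sum, ← Finset.sum_sub_distrib]
      exact Finset.sum_congr rfl fun i _ => by ring
    rw [this, ← hmean]
    ring
  have hterm : ∀ i ∈ Finset.univ, 0 ≤ v i * (x i - h) ^ 2 := fun i _ =>
    mul_nonneg (h0 i) (sq_nonneg _)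
  have hc : 0 < 2 * α / h := by positivity
  have hnn := Finset.sum_nonneg hterm
  refine ⟨hid, ?_, ?_⟩
  · rw [hid, hvar]
    positivity
  · rw [hid, hvar, mul_pos_iff_of_pos_left hc, hnn.lt_iff_ne', not_iff_not,
      Finset.sum_eq_zero_iff_of_nonneg hterm, funext_iff]
    refine forall_congr' fun i => ?_
    simp [hF, hH.ne']
end

section
/- The image H(C) of the equilibria set C under the Lyapunov function H has empty interior in ℝ. -/
/-!
An equilibrium `v` with support `S` satisfies `v_i^α (A v^α)_i = H(v) v_i` for all `i`. In the
coordinates `t_i = log v_i`, `i ∈ S`, this says, as `∑ v_i = 1`, that `t` is a critical point of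
`G(t) = H(e^t) exp (-2α (∑ e^{t_i} - 1))`, the sum and `H` being restricted to the indices in `S`;
moreover `G(t) = H(v)`. Hence `H(C)` is contained in the union, over the finitely
many `S`, of the sets of critical values of the functions `G`, which are real analytic.

A real analytic function on a finite-dimensional space has only countably many critical values
(`countable_criticalValues`), by induction on the dimension. Where all derivatives vanish, the
function is locally constant. At any other critical point, for some `i ≥ 1` all derivatives up to
order `i` vanish and the next one does not; a suitable component `g` of the `i`-th derivative then
has nonzero differential there, so near that point all critical points of the same kind lie on the
analytic hypersurface `g = 0`, and the induction hypothesis applies to the restriction of the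
function to it (`countable_image_hypersurface`). The Lindelöf property turns these local statements
into a countable union. A countable subset of `ℝ` has empty interior.
-/

open Filter Set Matrix

open scoped Topology

theorem countable_image_of_locally {E : Type*} [TopologicalSpace E] [SecondCountableTopology E]
    {f : E → ℝ} {s : Set E}
    (h : ∀ x ∈ s, ∃ t ∈ 𝓝[s] x, (f '' t).Countable) : (f '' s).Countable := by
  choose! t ht htc using h
  obtain ⟨u, hus, huc, hu⟩ := TopologicalSpace.countable_cover_nhdsWithin ht
  refine Set.Countable.mono (image_mono hu) ?_
  rw [image_iUnion₂]
  exact huc.biUnion fun x hx => htc x (hus hx)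

/-- A function is locally constant near a point where it is analytic and flat to infinite order;
this fails for smooth functions. -/
theorem eventually_const_of_flat {E : Type*} [NormedAddCommGroup E] [NormedSpace ℝ E]
    {f : E → ℝ} {x : E} (hf : AnalyticAt ℝ f x)
    (h : ∀ n, 1 ≤ n → iteratedFDeriv ℝ n f x = 0) : ∀ᶠ y in 𝓝 x, f y = f x := by
  obtain ⟨p, r, hp⟩ := hf
  filter_upwards [Metric.eball_mem_nhds x hp.r_pos] with y hy
  have hy' : y - x ∈ Metric.eball (0 : E) r := by
    simpa [Metric.mem_eball, edist_eq_enorm_sub] using hy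
  have h1 := hp.hasSum_iteratedFDeriv hy'
  have h2 := hasSum_single (f := fun n : ℕ ↦ ((n.factorial : ℕ) : ℝ)⁻¹ •
    iteratedFDeriv ℝ n f x fun _ ↦ (y - x)) 0 (by
      intro n hn
      simp [h n (Nat.one_le_iff_ne_zero.mpr hn)])
  have h3 := h1.unique h2
  simpa using h3

theorem range_eq_top_of_ne_zero {E : Type*} [NormedAddCommGroup E] [NormedSpace ℝ E]
    {l : E →L[ℝ] ℝ} (hl : l ≠ 0) : l.range = ⊤ := by
  rw [LinearMap.range_eq_top]
  refine LinearMap.surjective fun h => hl ?_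
  ext v
  exact congrArg (fun k : E →ₗ[ℝ] ℝ => k v) h

/-- If `g` is analytic with nonzero differential at `x`, the critical values that `f` takes on the
level set of `g` through `x`, close to `x`, are critical values of a function on the hyperplane
`ker (dg x)`, namely of `f` composed with an analytic parametrization of that level set. -/
theorem countable_image_hypersurface {E : Type} [NormedAddCommGroup E] [NormedSpace ℝ E]
    [FiniteDimensional ℝ E] {f g : E → ℝ} {x : E} (hg : AnalyticAt ℝ g x)
    (hg' : fderiv ℝ g x ≠ 0)
    (ih : ∀ φ : (fderiv ℝ g x).ker → ℝ,
      (φ '' {w | AnalyticAt ℝ φ w ∧ fderiv ℝ φ w = 0}).Countable) :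
    ∃ t ∈ 𝓝 x, (f '' {y ∈ t | g y = g x ∧ AnalyticAt ℝ f y ∧ fderiv ℝ f y = 0}).Countable := by
  have hgs : HasStrictFDerivAt g (fderiv ℝ g x) x := hg.hasStrictFDerivAt
  have hsurj : (fderiv ℝ g x).range = ⊤ := range_eq_top_of_ne_zero hg'
  have hk : (fderiv ℝ g x).ker.ClosedComplemented :=
    (fderiv ℝ g x).ker_closedComplemented_of_finiteDimensional_range
  let φ := hgs.implicitFunctionDataOfComplemented g (fderiv ℝ g x) hsurj hk
  have hl : φ.leftFun = g := rfl
  have hpt : φ.pt = x := rfl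
  have hright : AnalyticAt ℝ φ.rightFun x := by
    exact ((Classical.choose hk).analyticAt (x - x)).comp
      (f := fun y : E => y - x) (by fun_prop)
  have han : AnalyticAt ℝ φ.implicitFunction.uncurry (φ.prodFun φ.pt) :=
    (φ.contDiffAt_implicitFunction (n := ⊤) hg.contDiffAt hright.contDiffAt (by simp)).analyticAt
  have hcont : ContinuousAt φ.prodFun φ.pt := φ.hasStrictFDerivAt.continuousAt
  have hev := hcont.eventually han.eventually_analyticAt
  refine ⟨_, hev.and φ.implicitFunction_apply_image, ?_⟩
  refine (ih (fun w => f (φ.implicitFunction (g x) w))).mono ?_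
  rintro _ ⟨y, ⟨⟨hy1, hy2⟩, hgy, hfy, hdy⟩, rfl⟩
  rw [hl, hgy] at hy2
  have hψ : AnalyticAt ℝ (fun w => φ.implicitFunction (g x) w) (φ.rightFun y) := by
    have : φ.prodFun y = (g x, φ.rightFun y) := by rw [φ.prodFun_apply, hl, hgy]
    rw [this] at hy1
    exact hy1.comp (f := fun w => (g x, w)) (by fun_prop)
  refine ⟨φ.rightFun y, ⟨?_, ?_⟩, by simp only [hy2]⟩
  · exact AnalyticAt.comp (g := f) (by rwa [hy2]) hψ
  · have := fderiv_comp (φ.rightFun y) (g := f) (f := fun w => φ.implicitFunction (g x) w)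
      (by rw [hy2]; exact hfy.differentiableAt) hψ.differentiableAt
    rw [hy2, hdy] at this
    simpa [Function.comp_def] using this

/-- An analytic function on a finite-dimensional space has countably many critical values. The
function is only required to be analytic at the critical points under consideration, which makes
the induction on the dimension work without fixing domains of definition. -/
theorem countable_criticalValues (n : ℕ) : ∀ (E : Type) [NormedAddCommGroup E] [NormedSpace ℝ E]
    [FiniteDimensional ℝ E], Module.finrank ℝ E = n → ∀ f : E → ℝ,
    (f '' {x | AnalyticAt ℝ f x ∧ fderiv ℝ f x = 0}).Countable := by
  induction n with
  | zero =>
    intro E _ _ _ hE f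
    have := Module.finrank_zero_iff.mp hE
    exact (Set.subsingleton_of_subsingleton.image f).countable
  | succ n ih =>
    intro E _ _ _ hE f
    have : ProperSpace E := FiniteDimensional.proper ℝ E
    -- `Z` consists of the points where `f` is flat to infinite order, `T i` of critical points at
    -- which the derivative of order `i` vanishes and the next one does not.
    let T : ℕ → Set E := fun i => {x | (AnalyticAt ℝ f x ∧ fderiv ℝ f x = 0) ∧
      iteratedFDeriv ℝ i f x = 0 ∧ iteratedFDeriv ℝ (i + 1) f x ≠ 0}
    let Z : Set E := {x | AnalyticAt ℝ f x ∧ ∀ n, 1 ≤ n → iteratedFDeriv ℝ n f x = 0}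
    have hcov : {x | AnalyticAt ℝ f x ∧ fderiv ℝ f x = 0} ⊆ Z ∪ ⋃ i, T i := by
      rintro x ⟨hx, hdx⟩
      by_contra hcon
      simp only [mem_union, mem_iUnion, not_or, not_exists] at hcon
      obtain ⟨hZ, hT⟩ := hcon
      refine hZ ⟨hx, fun m hm => ?_⟩
      induction m, hm using Nat.le_induction with
      | base =>
        rw [← norm_eq_zero, norm_iteratedFDeriv_one, hdx, norm_zero]
      | succ m hm ihm =>
        by_contra hne
        exact hT m ⟨⟨hx, hdx⟩, ihm, hne⟩
    refine Set.Countable.mono (image_mono hcov) ?_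
    rw [image_union, image_iUnion]
    refine Set.Countable.union ?_ (Set.countable_iUnion fun i => ?_)
    · refine countable_image_of_locally fun x hx => ?_
      refine ⟨_, mem_nhdsWithin_of_mem_nhds (eventually_const_of_flat hx.1 hx.2), ?_⟩
      refine (Set.countable_singleton (f x)).mono ?_
      rintro _ ⟨y, hy, rfl⟩
      exact hy
    · refine countable_image_of_locally fun x hx => ?_
      obtain ⟨⟨hx, hdx⟩, h0, h1⟩ := hx
      have hD : AnalyticAt ℝ (iteratedFDeriv ℝ i f) x :=
        AnalyticOnNhd.iteratedFDeriv_of_isOpen (s := {y | AnalyticAt ℝ f y}) (fun y hy => hy)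
          (isOpen_analyticAt ℝ f) i x hx
      have hD' : fderiv ℝ (iteratedFDeriv ℝ i f) x ≠ 0 := by
        intro hcon
        apply h1
        ext m
        rw [iteratedFDeriv_succ_apply_left, hcon]
        rfl
      obtain ⟨v, hv⟩ : ∃ v, fderiv ℝ (iteratedFDeriv ℝ i f) x v ≠ 0 := by
        by_contra! hcon
        exact hD' (ContinuousLinearMap.ext hcon)
      obtain ⟨m, hm⟩ : ∃ m, fderiv ℝ (iteratedFDeriv ℝ i f) x v m ≠ 0 := by
        by_contra! hcon
        exact hv (ContinuousMultilinearMap.ext hcon)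
      -- Some scalar component `g` of the `i`-th derivative is a submersion at `x` and vanishes
      -- on `T i`.
      let L := ContinuousMultilinearMap.apply ℝ (fun _ : Fin i => E) ℝ m
      let g : E → ℝ := fun y => L (iteratedFDeriv ℝ i f y)
      have hg : AnalyticAt ℝ g x := (L.analyticAt _).comp hD
      have hdg : fderiv ℝ g x = L.comp (fderiv ℝ (iteratedFDeriv ℝ i f) x) :=
        (L.hasFDerivAt.comp x hD.differentiableAt.hasFDerivAt).fderiv
      have hg' : fderiv ℝ g x ≠ 0 := by
        intro hcon
        apply hm
        have := congrArg (fun l => l v) (hdg.symm.trans hcon)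
        simpa [L] using this
      have hker : Module.finrank ℝ (fderiv ℝ g x).ker = n := by
        have h := (fderiv ℝ g x).toLinearMap.finrank_range_add_finrank_ker
        have h2 : Module.finrank ℝ (fderiv ℝ g x).range = 1 := by
          rw [range_eq_top_of_ne_zero hg']; simp
        rw [hE] at h
        omega
      obtain ⟨t, ht, htc⟩ := countable_image_hypersurface (f := f) hg hg' (ih _ hker)
      refine ⟨t ∩ T i, inter_mem (mem_nhdsWithin_of_mem_nhds ht) self_mem_nhdsWithin, htc.mono (image_mono ?_)⟩
      rintro y ⟨hyt, ⟨hy, hdy⟩, hy0, -⟩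
      exact ⟨hyt, by simp only [g, hy0, h0], hy, hdy⟩


/-- The function `G(t) = H(e^t) exp (-2α (∑ e^{t_i} - 1))` with the sums restricted to the support
`S`. The restriction is encoded by the weights `c`, which are `1` on `S` and `0` elsewhere, so that
`t` ranges over the same space for all `S`. -/
noncomputable def logH {N : ℕ} (A : Matrix (Fin N) (Fin N) ℝ) (α : ℝ) (c : Fin N → ℝ)
    (t : Fin N → ℝ) : ℝ :=
  (∑ i, ∑ j, A i j * (c i * Real.exp (α * t i)) * (c j * Real.exp (α * t j))) *
    Real.exp (-2 * α * ((∑ i, c i * Real.exp (t i)) - 1))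

theorem analyticAt_logH {N : ℕ} (A : Matrix (Fin N) (Fin N) ℝ) (α : ℝ) (c t : Fin N → ℝ) :
    AnalyticAt ℝ (logH A α c) t := by
  have hp : ∀ i : Fin N, AnalyticAt ℝ (fun t : Fin N → ℝ => t i) t := fun i =>
    (ContinuousLinearMap.proj (R := ℝ) (φ := fun _ : Fin N => ℝ) i).analyticAt t
  unfold logH
  refine AnalyticAt.mul ?_ ?_
  · refine Finset.analyticAt_fun_sum _ fun i _ => Finset.analyticAt_fun_sum _ fun j _ => ?_
    exact (analyticAt_const.mul (analyticAt_const.mul (analyticAt_const.mul (hp i)).rexp)).mul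
      (analyticAt_const.mul (analyticAt_const.mul (hp j)).rexp)
  · refine AnalyticAt.rexp (analyticAt_const.mul (AnalyticAt.sub ?_ analyticAt_const))
    exact Finset.analyticAt_fun_sum _ fun i _ => analyticAt_const.mul (hp i).rexp

/-- Criticality of `logH`, with `x` and `u` standing for `v^α` and `v`, and `h` for `H(v)`. -/
theorem fderiv_logH_eq_zero {N : ℕ} (A : Matrix (Fin N) (Fin N) ℝ) (α : ℝ) (c t : Fin N → ℝ)
    (hsymm : ∀ i j, A i j = A j i) {x u : Fin N → ℝ} {h : ℝ}
    (hx : ∀ i, c i * Real.exp (α * t i) = x i) (hu : ∀ i, c i * Real.exp (t i) = u i)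
    (hh : ∑ i, ∑ j, A i j * x i * x j = h) (hsum : ∑ i, u i = 1)
    (heq : ∀ i, x i * ∑ j, A i j * x j = h * u i) :
    fderiv ℝ (logH A α c) t = 0 := by
  let p : Fin N → (Fin N → ℝ) →L[ℝ] ℝ := fun i =>
    ContinuousLinearMap.proj (R := ℝ) (φ := fun _ : Fin N => ℝ) i
  have hp : ∀ i, HasFDerivAt (fun t : Fin N → ℝ => t i) (p i) t := fun i => (p i).hasFDerivAt
  have hX : ∀ i, HasFDerivAt (fun t : Fin N → ℝ => c i * Real.exp (α * t i))
      ((α * x i) • p i) t := by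
    intro i
    convert! (((hp i).const_mul α).exp).const_mul (c i) using 1
    rw [← hx i, smul_smul, smul_smul]
    ring_nf
  have hU : ∀ i, HasFDerivAt (fun t : Fin N → ℝ => c i * Real.exp (t i)) (u i • p i) t := by
    intro i
    convert! ((hp i).exp).const_mul (c i) using 1
    rw [← hu i, smul_smul]
  have hK : HasFDerivAt (fun t : Fin N → ℝ =>
      ∑ i, ∑ j, A i j * (c i * Real.exp (α * t i)) * (c j * Real.exp (α * t j)))
      (∑ i, ∑ j, (α * (A i j * x i * x j)) • (p i + p j)) t := by
    refine HasFDerivAt.fun_sum fun i _ => HasFDerivAt.fun_sum fun j _ => ?_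
    convert! ((hX i).const_mul (A i j)).mul (hX j) using 1
    ext w
    simp [hx]
    ring
  have hE : HasFDerivAt (fun t : Fin N → ℝ =>
      Real.exp (-2 * α * ((∑ i, c i * Real.exp (t i)) - 1)))
      ((-2 * α) • ∑ i, u i • p i) t := by
    convert! (((HasFDerivAt.fun_sum fun i (_ : i ∈ Finset.univ) => hU i).sub_const 1).const_mul
      (-2 * α)).exp using 1
    simp only [hu, hsum, sub_self, mul_zero, Real.exp_zero, one_smul]
  have hG : HasFDerivAt (logH A α c) _ t := hK.mul hE
  rw [hG.fderiv]
  ext1 w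
  have e1 : ∀ w : Fin N → ℝ, ∑ i, ∑ j, A i j * x i * x j * w i = h * ∑ i, u i * w i := by
    intro w
    rw [Finset.mul_sum]
    refine Finset.sum_congr rfl fun i _ => ?_
    rw [← mul_assoc, ← heq i, Finset.mul_sum, Finset.sum_mul]
    exact Finset.sum_congr rfl fun j _ => by ring
  have e2 : ∑ i, ∑ j, A i j * x i * x j * w j = h * ∑ i, u i * w i := by
    rw [Finset.sum_comm, ← e1 w]
    refine Finset.sum_congr rfl fun i _ => Finset.sum_congr rfl fun j _ => ?_
    rw [hsymm j i]
    ring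
  have e3 : ∑ i, ∑ j, α * (A i j * x i * x j) * (w i + w j) = 2 * α * (h * ∑ i, u i * w i) := by
    have : ∑ i, ∑ j, α * (A i j * x i * x j) * (w i + w j) =
        α * (∑ i, ∑ j, A i j * x i * x j * w i + ∑ i, ∑ j, A i j * x i * x j * w j) := by
      rw [← Finset.sum_add_distrib, Finset.mul_sum]
      refine Finset.sum_congr rfl fun i _ => ?_
      rw [← Finset.sum_add_distrib, Finset.mul_sum]
      exact Finset.sum_congr rfl fun j _ => by ring
    rw [this, e1 w, e2]
    ring
  simp only [hx, hu, hh, hsum, _root_.add_apply, _root_.smul_apply,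
    _root_.sum_apply, smul_eq_mul, p, ContinuousLinearMap.proj_apply, e3]
  simp
  ring

/-- The image `H(C)` of the equilibria set
`C = {v ∈ Δ : F(v) = 0}` under the Lyapunov function `H` has empty interior in `ℝ`. -/
theorem image_equilibria_empty_interior
    {N : ℕ} (hN : 2 ≤ N) {α : ℝ} (hα : 1 < α)
    (A : Matrix (Fin N) (Fin N) ℝ)
    (hsymm : ∀ i j, A i j = A j i)
    (hnonneg : ∀ i j, 0 ≤ A i j)
    (hoffdiag : ∀ i j, i ≠ j → 0 < A i j)
    (hrow : ∀ i i', ∑ j, A i j = ∑ j, A i' j) :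
    interior (Hfun A α '' {v | v ∈ simplexD A ∧ Ffield A α v = 0}) = ∅ := by
  have hcount : (⋃ S : Finset (Fin N), logH A α (fun i => if i ∈ S then 1 else 0) ''
      {t | AnalyticAt ℝ (logH A α (fun i => if i ∈ S then 1 else 0)) t ∧
        fderiv ℝ (logH A α (fun i => if i ∈ S then 1 else 0)) t = 0}).Countable :=
    Set.countable_iUnion fun S => countable_criticalValues _ (Fin N → ℝ) rfl _
  rw [interior_eq_empty_iff_dense_compl]
  refine Set.Countable.dense_compl ℝ (hcount.mono ?_)
  rintro _ ⟨v, ⟨⟨hv0, hv1, -⟩, hF⟩, rfl⟩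
  have hπ : ∀ i, v i ^ α * (∑ j, A i j * v j ^ α) / Hfun A α v = v i := fun i =>
    sub_eq_zero.mp (congrFun hF i)
  -- If `H(v)` were `0`, then `π(v) = v` would vanish, as division by zero yields zero.
  have hH : Hfun A α v ≠ 0 := by
    intro h0
    have hz : ∀ i, v i = 0 := fun i => by
      have := hπ i
      rw [h0, div_zero] at this
      exact this.symm
    simp [hz] at hv1
  have heq : ∀ i, v i ^ α * (∑ j, A i j * v j ^ α) = Hfun A α v * v i := fun i => by
    have := (div_eq_iff hH).mp (hπ i)
    rw [this, mul_comm]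
  have hpos : ∀ i, v i ≠ 0 → 0 < v i := fun i hi => lt_of_le_of_ne (hv0 i) (Ne.symm hi)
  let S : Finset (Fin N) := Finset.univ.filter fun i => v i ≠ 0
  let c : Fin N → ℝ := fun i => if i ∈ S then 1 else 0
  let t : Fin N → ℝ := fun i => Real.log (v i)
  have hx : ∀ i, c i * Real.exp (α * t i) = v i ^ α := by
    intro i
    by_cases hi : v i = 0
    · simp [c, S, hi, Real.zero_rpow (by linarith : α ≠ 0)]
    · simp [c, S, hi, t, Real.rpow_def_of_pos (hpos i hi), mul_comm]
  have hu : ∀ i, c i * Real.exp (t i) = v i := by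
    intro i
    by_cases hi : v i = 0
    · simp [c, S, hi]
    · simp [c, S, hi, t, Real.exp_log (hpos i hi)]
  refine mem_iUnion.mpr ⟨S, t, ⟨analyticAt_logH A α c t,
    fderiv_logH_eq_zero A α c t hsymm hx hu rfl hv1 heq⟩, ?_⟩
  change logH A α c t = _
  simp [logH, hx, hu, hv1, Hfun]
end

section
/- Let v ∈ C be an equilibrium. Then for all i, j ∈ supp(v), the directional derivative of F at v in the direction e_i − e_j equals (α − 1)(e_i − e_j) + α Σ_ℓ [v_ℓ^α (A_{ℓ,i} v_i^{α−1} − A_{ℓ,j} v_j^{α−1}) / H(v)] e_ℓ, and for every i ∉ supp(v), the directional derivative of F at v in the direction e_i − v equals −(e_i − v). -/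
/-!
Since `α > 1`, each `t ↦ t ^ α` is differentiable on all of `ℝ`, also at `0`, so `F` has a line
derivative in every direction `u`, given by the quotient rule (`hasLineDerivAt_Ffield`). With
`w k = α * v k ^ (α - 1) * u k`, the symmetry of `A` turns the derivative of `H` into
`2 * ∑ k, w k * (A v^α) k`. At an equilibrium `v k ^ α * (A v^α) k = H v * v k`, hence
`w k * (A v^α) k` is `α * H v * u k` on the support of `v` and `0` off it
(`equilibrium_weight`). Thus the derivative of `H` is `2 * α * H v` times the sum of `u` over the
support: it vanishes for `u = e_i - e_j`, and is `-2 * α * H v` for `u = e_i - v`, where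
`w k = -α * v k ^ α`. Substitution into the quotient rule gives both formulas.
-/

open Filter Set Matrix

/-- The quotient-rule form of the line derivative of `F`, valid wherever `H` does not vanish. -/
lemma hasLineDerivAt_Ffield {N : ℕ} {α : ℝ} (hα : 1 < α) (A : Matrix (Fin N) (Fin N) ℝ)
    (hsymm : ∀ i j, A i j = A j i) (v u : Fin N → ℝ) (hH : Hfun A α v ≠ 0)
    (w : Fin N → ℝ) (hw : ∀ k, w k = α * v k ^ (α - 1) * u k) :
    HasLineDerivAt ℝ (Ffield A α)
      (fun l => ((w l * (∑ j, A l j * v j ^ α) + v l ^ α * ∑ j, A l j * w j) * Hfun A α v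
        - v l ^ α * (∑ j, A l j * v j ^ α) * (2 * ∑ k, w k * ∑ j, A k j * v j ^ α))
          / Hfun A α v ^ 2 - u l) v u := by
  have hlin : ∀ k, HasDerivAt (fun t : ℝ => (v + t • u) k) (u k) 0 := by
    intro k
    simpa using ((hasDerivAt_id (0 : ℝ)).mul_const (u k)).const_add (v k)
  have hpow : ∀ k, HasDerivAt (fun t : ℝ => (v + t • u) k ^ α) (w k) 0 := by
    intro k
    have h := (hlin k).rpow_const (p := α) (Or.inr hα.le)
    convert h using 1
    simp [hw]
    ring
  have hS : ∀ l, HasDerivAt (fun t : ℝ => ∑ j, A l j * (v + t • u) j ^ α)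
      (∑ j, A l j * w j) 0 := fun l =>
    HasDerivAt.fun_sum fun j _ => (hpow j).const_mul (A l j)
  have hHd : HasDerivAt (fun t : ℝ => Hfun A α (v + t • u))
      (2 * ∑ k, w k * ∑ j, A k j * v j ^ α) 0 := by
    have h : HasDerivAt (fun t : ℝ => Hfun A α (v + t • u))
        (∑ i, ∑ j, (A i j * w i * v j ^ α + A i j * v i ^ α * w j)) 0 := by
      unfold Hfun
      refine HasDerivAt.fun_sum fun i _ => HasDerivAt.fun_sum fun j _ => ?_
      simpa using ((hpow i).const_mul (A i j)).fun_mul (hpow j)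
    convert h using 1
    simp only [Finset.sum_add_distrib]
    have h1 : ∑ i, ∑ j, A i j * w i * v j ^ α = ∑ k, w k * ∑ j, A k j * v j ^ α := by
      refine Finset.sum_congr rfl fun i _ => ?_
      rw [Finset.mul_sum]
      exact Finset.sum_congr rfl fun j _ => by ring
    have h2 : ∑ i, ∑ j, A i j * v i ^ α * w j = ∑ i, ∑ j, A i j * w i * v j ^ α := by
      rw [Finset.sum_comm]
      refine Finset.sum_congr rfl fun i _ => Finset.sum_congr rfl fun j _ => ?_
      rw [hsymm j i]
      ring
    rw [h2, h1]
    ring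
  unfold HasLineDerivAt
  rw [hasDerivAt_pi]
  intro l
  simpa [Ffield, piFun] using
    (((hpow l).fun_mul (hS l)).fun_div hHd (by simpa using hH)).fun_sub (hlin l)

/-- On the support of `v`, the equilibrium equation divided by `v k` reads
`v k ^ (α - 1) * (A v^α) k = H v`; off the support, `v k ^ (α - 1) = 0` because `α > 1`. -/
lemma equilibrium_weight {N : ℕ} {α : ℝ} (hα : 1 < α) (A : Matrix (Fin N) (Fin N) ℝ)
    (v u : Fin N → ℝ) (hnn : ∀ k, 0 ≤ v k)
    (hS : ∀ k, v k ^ α * (∑ j, A k j * v j ^ α) = Hfun A α v * v k) (k : Fin N) :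
    α * v k ^ (α - 1) * u k * (∑ j, A k j * v j ^ α)
      = α * Hfun A α v * (if v k = 0 then 0 else u k) := by
  by_cases h0 : v k = 0
  · simp [h0, Real.zero_rpow (sub_pos.2 hα).ne']
  · have hk := hS k
    have hpos : 0 < v k := lt_of_le_of_ne (hnn k) (Ne.symm h0)
    have hp : v k ^ α = v k ^ (α - 1) * v k := by
      rw [Real.rpow_sub_one h0]
      field_simp
    rw [hp] at hk
    have h1 : v k ^ (α - 1) * (∑ j, A k j * v j ^ α) = Hfun A α v := by
      apply mul_right_cancel₀ h0
      linarith
    rw [if_neg h0, ← h1]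
    ring

/-- At an equilibrium `v`, for `i, j ∈ supp(v)`,
`D_{e_i - e_j} F(v) = (α-1)(e_i - e_j) + α ∑_ℓ [v_ℓ^α (A_{ℓ,i} v_i^{α-1} - A_{ℓ,j} v_j^{α-1})/H(v)] e_ℓ`,
and for `i ∉ supp(v)`, `D_{e_i - v} F(v) = -(e_i - v)`. -/
theorem lineDeriv_Ffield_at_equilibrium
    {N : ℕ} (hN : 2 ≤ N) {α : ℝ} (hα : 1 < α)
    (A : Matrix (Fin N) (Fin N) ℝ)
    (hsymm : ∀ i j, A i j = A j i)
    (hnonneg : ∀ i j, 0 ≤ A i j)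
    (hoffdiag : ∀ i j, i ≠ j → 0 < A i j)
    (hrow : ∀ i i', ∑ j, A i j = ∑ j, A i' j)
    (v : Fin N → ℝ) (hv : v ∈ simplexD A) (heq : Ffield A α v = 0) :
    (∀ i j : Fin N, v i ≠ 0 → v j ≠ 0 →
      lineDeriv ℝ (Ffield A α) v (Pi.single i 1 - Pi.single j 1) =
        fun ℓ => (α - 1) * ((Pi.single i 1 - Pi.single j 1 : Fin N → ℝ) ℓ) +
          α * (v ℓ ^ α * (A ℓ i * v i ^ (α - 1) - A ℓ j * v j ^ (α - 1)) / Hfun A α v)) ∧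
    (∀ i : Fin N, v i = 0 →
      lineDeriv ℝ (Ffield A α) v (Pi.single i 1 - v) = -(Pi.single i 1 - v)) := by
  obtain ⟨hnn, hsum, -⟩ := hv
  have hpi : ∀ k, v k ^ α * (∑ j, A k j * v j ^ α) / Hfun A α v = v k := fun k =>
    sub_eq_zero.1 (congrFun heq k)
  -- If `H v = 0`, division by zero makes `π v = 0`, and an equilibrium would be the zero vector.
  have hH : Hfun A α v ≠ 0 := by
    intro h
    have h0 : ∀ k, v k = 0 := fun k => by rw [← hpi k, h, div_zero]
    simp [h0] at hsum
  have hS : ∀ k, v k ^ α * (∑ j, A k j * v j ^ α) = Hfun A α v * v k := fun k => by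
    rw [mul_comm (Hfun A α v)]
    exact (div_eq_iff hH).1 (hpi k)
  have key : ∀ u : Fin N → ℝ, lineDeriv ℝ (Ffield A α) v u = fun l =>
      α * (if v l = 0 then 0 else u l)
        + v l ^ α * (∑ j, A l j * (α * v j ^ (α - 1) * u j)) / Hfun A α v
        - 2 * α * v l * (∑ k, if v k = 0 then 0 else u k) - u l := by
    intro u
    rw [(hasLineDerivAt_Ffield hα A hsymm v u hH _ fun _ => rfl).lineDeriv]
    funext l
    simp only [equilibrium_weight hα A v u hnn hS, hS, ← Finset.mul_sum]
    field_simp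
  refine ⟨fun i j hi hj => ?_, fun i hi => ?_⟩
  · rw [key]
    have hQ : ∀ k, (if v k = 0 then 0 else (Pi.single i 1 - Pi.single j 1 : Fin N → ℝ) k)
        = (Pi.single i 1 - Pi.single j 1 : Fin N → ℝ) k := by
      intro k
      split_ifs with h
      · have h1 : k ≠ i := fun e => hi (e ▸ h)
        have h2 : k ≠ j := fun e => hj (e ▸ h)
        simp [h1, h2]
      · rfl
    have hQs : ∑ k, (Pi.single i 1 - Pi.single j 1 : Fin N → ℝ) k = 0 := by
      simp
    have hW : ∀ l, ∑ k, A l k * (α * v k ^ (α - 1) *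
        (Pi.single i 1 - Pi.single j 1 : Fin N → ℝ) k)
        = α * (A l i * v i ^ (α - 1) - A l j * v j ^ (α - 1)) := by
      intro l
      simp [mul_sub, Finset.sum_sub_distrib, Pi.single_apply]
      ring
    funext l
    simp only [hQ, hQs, hW]
    ring
  · rw [key]
    have hQ : ∀ k, (if v k = 0 then 0 else (Pi.single i 1 - v : Fin N → ℝ) k) = - v k := by
      intro k
      split_ifs with h
      · simp [h]
      · have h1 : k ≠ i := fun e => h (e ▸ hi)
        simp [h1]
    have hw : ∀ k, α * v k ^ (α - 1) * (Pi.single i 1 - v : Fin N → ℝ) k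
        = -α * v k ^ α := by
      intro k
      by_cases h : v k = 0
      · simp [h, Real.zero_rpow (sub_pos.2 hα).ne', Real.zero_rpow (zero_lt_one.trans hα).ne']
      · have h1 : k ≠ i := fun e => h (e ▸ hi)
        simp only [Pi.sub_apply, Pi.single_eq_of_ne h1, Real.rpow_sub_one h]
        field_simp
        ring
    have hW : ∀ l, v l ^ α * ∑ k, A l k * (-α * v k ^ α) = -α * (Hfun A α v * v l) := by
      intro l
      rw [← hS l, Finset.mul_sum, Finset.mul_sum, Finset.mul_sum]
      exact Finset.sum_congr rfl fun k _ => by ring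
    funext l
    simp only [hQ, hw, hW, Finset.sum_neg_distrib, hsum, Pi.neg_apply]
    field_simp
    ring
end

section
/- Let v ∈ C be an equilibrium. Then all eigenvalues of DF(v), the differential of F at v viewed as a linear endomorphism of T_0Δ = {x ∈ ℝ^N : Σ_i x_i = 0}, are real. -/
/-! The eigenvalue problem for `DF(v)` on `T_0Δ` is, on the support of `v`, a self-adjoint one for
the weighted inner product `∑ conj(xᵢ) yᵢ / vᵢ`.

Write `S = A v^α`. At an equilibrium `vᵢ = vᵢ^α Sᵢ / H`, so `eᵢ := vᵢ^(α-1) Sᵢ / H` equals `1` on the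
support of `v` and `0` off it, and the Jacobian (`DFmat_apply`) becomes
`∂ⱼFᵢ = δᵢⱼ (α eᵢ - 1) + vᵢ Bᵢⱼ - 2α vᵢ eⱼ` with `B` real symmetric.
Off the support the eigenvalue equation reads `-xᵢ = λ xᵢ`, so either `λ = -1` or `x` is supported
where `v` is. In the latter case `∑ⱼ eⱼ xⱼ = ∑ⱼ xⱼ = 0` removes the only nonsymmetric term, leaving
`(λ + 1 - α) xᵢ = vᵢ (B x)ᵢ`. Pairing with `conj(xᵢ) / vᵢ` gives
`(λ + 1 - α) ∑ |xᵢ|² / vᵢ = ⟨x, B x⟩ ∈ ℝ`, hence `λ` is real (`im_eq_zero_of_eigen`). -/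

open Filter Set Matrix

/-- The Jacobian matrix of `F` at `v` (matrix of partial derivatives `∂_j F_i (v)`). -/
noncomputable def DFmat {N : ℕ} (A : Matrix (Fin N) (Fin N) ℝ) (α : ℝ)
    (v : Fin N → ℝ) : Matrix (Fin N) (Fin N) ℝ :=
  fun i j => lineDeriv ℝ (fun u => Ffield A α u i) v (Pi.single j 1)

/-- `v` is linearly stable: every eigenvalue of `DF(v)`, viewed (after complexification)
as a linear map of `T_0Δ = {x : ∑ x_i = 0}`, has negative real part. -/
def IsLinStable {N : ℕ} (A : Matrix (Fin N) (Fin N) ℝ) (α : ℝ)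
    (v : Fin N → ℝ) : Prop :=
  ∀ (lam : ℂ) (x : Fin N → ℂ), x ≠ 0 → (∑ i, x i) = 0 →
    ((DFmat A α v).map (fun r => (r : ℂ))) *ᵥ x = lam • x → lam.re < 0

/-- `v` is linearly unstable: some eigenvalue of `DF(v)`, viewed (after complexification)
as a linear map of `T_0Δ = {x : ∑ x_i = 0}`, has positive real part. -/
def IsLinUnstable {N : ℕ} (A : Matrix (Fin N) (Fin N) ℝ) (α : ℝ)
    (v : Fin N → ℝ) : Prop :=
  ∃ (lam : ℂ) (x : Fin N → ℂ), x ≠ 0 ∧ (∑ i, x i) = 0 ∧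
    ((DFmat A α v).map (fun r => (r : ℂ))) *ᵥ x = lam • x ∧ 0 < lam.re

/-- The partial derivatives of `F` wherever `H ≠ 0`; since `α > 1` the power `t ↦ t ^ α` is
differentiable even at `0`, so this also covers boundary points of the simplex. -/
lemma DFmat_apply {N : ℕ} {α : ℝ} (hα : 1 < α) (A : Matrix (Fin N) (Fin N) ℝ)
    (hsymm : ∀ i j, A i j = A j i) (v : Fin N → ℝ) (hH : Hfun A α v ≠ 0) (i j : Fin N) :
    DFmat A α v i j =
      ((if i = j then α * v i ^ (α - 1) * ∑ k, A i k * v k ^ α else 0)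
        + v i ^ α * (A i j * (α * v j ^ (α - 1)))) / Hfun A α v
      - (v i ^ α * (∑ k, A i k * v k ^ α) / Hfun A α v)
        * (2 * (α * v j ^ (α - 1)) * (∑ k, A j k * v k ^ α) / Hfun A α v)
      - (if i = j then 1 else 0) := by
  -- derivative of each power `u k ^ α` along the `j`-th coordinate direction
  set q : Fin N → ℝ := fun k => if k = j then α * v j ^ (α - 1) else 0 with hq
  have hlin : ∀ k, HasDerivAt (fun t : ℝ => (v + t • (Pi.single j 1 : Fin N → ℝ)) k)
      (if k = j then 1 else 0) 0 := by
    intro k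
    have h := ((hasDerivAt_id (0 : ℝ)).mul_const ((Pi.single j 1 : Fin N → ℝ) k)).const_add (v k)
    simpa [Pi.single_apply] using h
  have hw : ∀ k, HasDerivAt (fun t : ℝ => (v + t • (Pi.single j 1 : Fin N → ℝ)) k ^ α) (q k) 0 := by
    intro k
    have h := (hlin k).rpow_const (p := α) (Or.inr hα.le)
    convert h using 1
    by_cases hk : k = j
    · subst hk; simp [hq]
    · simp [hq, hk]
  have hS : ∀ a, HasDerivAt
      (fun t : ℝ => ∑ k, A a k * (v + t • (Pi.single j 1 : Fin N → ℝ)) k ^ α)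
      (∑ k, A a k * q k) 0 :=
    fun a => HasDerivAt.fun_sum fun k _ => (hw k).const_mul (A a k)
  have hHd : HasDerivAt (fun t : ℝ => Hfun A α (v + t • (Pi.single j 1 : Fin N → ℝ)))
      (∑ a, ∑ b, (A a b * q a * v b ^ α + A a b * v a ^ α * q b)) 0 := by
    unfold Hfun
    refine HasDerivAt.fun_sum fun a _ => HasDerivAt.fun_sum fun b _ => ?_
    have h := ((hw a).const_mul (A a b)).fun_mul (hw b)
    simpa using h
  have hH0 : Hfun A α (v + (0 : ℝ) • (Pi.single j 1 : Fin N → ℝ)) ≠ 0 := by simpa using hH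
  have hF := ((((hw i).mul (hS i)).div hHd hH0).sub (hlin i)).deriv
  have hHsum : (∑ a, ∑ b, (A a b * q a * v b ^ α + A a b * v a ^ α * q b))
      = 2 * (α * v j ^ (α - 1)) * ∑ k, A j k * v k ^ α := by
    have h1 : ∑ a, ∑ b, A a b * q a * v b ^ α
        = (α * v j ^ (α - 1)) * ∑ k, A j k * v k ^ α := by
      rw [Finset.sum_eq_single j]
      · rw [Finset.mul_sum]
        refine Finset.sum_congr rfl fun b _ => ?_
        simp only [hq, if_true]; ring
      · intro a _ ha; simp [hq, ha]
      · simp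
    have h2 : ∑ a, ∑ b, A a b * v a ^ α * q b
        = (α * v j ^ (α - 1)) * ∑ k, A j k * v k ^ α := by
      rw [Finset.mul_sum]
      refine Finset.sum_congr rfl fun a _ => ?_
      rw [Finset.sum_eq_single j]
      · simp only [hq, if_true]; rw [hsymm a j]; ring
      · intro b _ hb; simp [hq, hb]
      · simp
    simp only [Finset.sum_add_distrib]
    rw [h1, h2]; ring
  have hSsum : ∑ k, A i k * q k = A i j * (α * v j ^ (α - 1)) := by
    simp [hq]
  rw [hHsum, hSsum] at hF
  have hD : DFmat A α v i j = _ := hF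
  rw [hD]
  simp only [Pi.mul_apply, zero_smul, add_zero]
  by_cases hij : i = j
  · subst hij
    simp only [hq, if_true]
    field_simp
  · simp only [hq, hij, if_false]
    field_simp
    ring

/-- The linear algebra behind the theorem: a matrix `δᵢⱼ (α eᵢ - 1) + vᵢ Bᵢⱼ - c vᵢ eⱼ`, with `B`
symmetric, `v ≥ 0` and `e` the indicator of the support of `v`, has only real eigenvalues on the
vectors of zero sum. -/
lemma im_eq_zero_of_eigen {N : ℕ} {α c : ℝ} (M B : Matrix (Fin N) (Fin N) ℝ)
    (hB : ∀ i j, B i j = B j i) (v e : Fin N → ℝ) (hv : ∀ i, 0 ≤ v i)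
    (he0 : ∀ i, v i = 0 → e i = 0) (he1 : ∀ i, v i ≠ 0 → e i = 1)
    (hM : ∀ i j, M i j = (if i = j then α * e i - 1 else 0) + v i * B i j - c * v i * e j)
    (lam : ℂ) (x : Fin N → ℂ) (hx : x ≠ 0) (hsum : ∑ i, x i = 0)
    (heig : (M.map (fun r => (r : ℂ))) *ᵥ x = lam • x) : lam.im = 0 := by
  by_cases hlam : lam = -1
  · simp [hlam]
  have hrow : ∀ i, ((α * e i - 1 : ℝ) : ℂ) * x i + v i * ∑ j, (B i j : ℂ) * x j
      - c * v i * ∑ j, (e j : ℂ) * x j = lam * x i := by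
    intro i
    have h := congrFun heig i
    simp only [Matrix.mulVec, dotProduct, Matrix.map_apply, Pi.smul_apply, smul_eq_mul] at h
    rw [← h, Finset.mul_sum, Finset.mul_sum]
    have hd : ((α * e i - 1 : ℝ) : ℂ) * x i
        = ∑ j, (((if i = j then α * e i - 1 else 0 : ℝ) : ℂ)) * x j := by
      rw [Finset.sum_eq_single i]
      · simp
      · intro j _ hj; simp [Ne.symm hj]
      · simp
    rw [hd, ← Finset.sum_add_distrib, ← Finset.sum_sub_distrib]
    refine Finset.sum_congr rfl fun j _ => ?_
    rw [hM]; push_cast; ring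
  have hx0 : ∀ i, v i = 0 → x i = 0 := by
    intro i hi
    have h := hrow i
    rw [hi, he0 i hi] at h
    have h' : (lam + 1) * x i = 0 := by
      push_cast at h; linear_combination -h
    rcases mul_eq_zero.mp h' with h1 | h1
    · exact absurd (eq_neg_of_add_eq_zero_left h1) hlam
    · exact h1
  have hesum : ∑ j, (e j : ℂ) * x j = 0 := by
    rw [← hsum]
    refine Finset.sum_congr rfl fun j _ => ?_
    by_cases hj : v j = 0
    · simp [hx0 j hj]
    · simp [he1 j hj]
  have hpair : ((lam + 1 - α) * ((∑ i, (v i)⁻¹ * Complex.normSq (x i) : ℝ) : ℂ))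
      = ∑ i, ∑ j, (starRingEnd ℂ) (x i) * B i j * x j := by
    push_cast
    rw [Finset.mul_sum]
    refine Finset.sum_congr rfl fun i _ => ?_
    by_cases hi : v i = 0
    · simp [hx0 i hi]
    · have h := hrow i
      rw [hesum, he1 i hi] at h
      have hvi : (v i : ℂ) ≠ 0 := by exact_mod_cast hi
      have h2 : ∑ j, (starRingEnd ℂ) (x i) * B i j * x j
          = (starRingEnd ℂ) (x i) * ∑ j, (B i j : ℂ) * x j := by
        rw [Finset.mul_sum]
        exact Finset.sum_congr rfl fun j _ => by ring
      rw [h2, Complex.normSq_eq_conj_mul_self]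
      push_cast at h
      field_simp
      linear_combination -(starRingEnd ℂ) (x i) * h
  have him : (∑ i, ∑ j, (starRingEnd ℂ) (x i) * B i j * x j).im = 0 := by
    rw [← Complex.conj_eq_iff_im, map_sum, Finset.sum_congr rfl fun i _ => map_sum _ _ _,
      Finset.sum_comm]
    refine Finset.sum_congr rfl fun i _ => Finset.sum_congr rfl fun j _ => ?_
    simp only [map_mul, Complex.conj_conj, Complex.conj_ofReal]
    rw [hB j i]; ring
  have hpos : 0 < ∑ i, (v i)⁻¹ * Complex.normSq (x i) := by
    obtain ⟨k, hk⟩ := Function.ne_iff.mp hx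
    refine Finset.sum_pos' (fun i _ => mul_nonneg (inv_nonneg.mpr (hv i)) (Complex.normSq_nonneg _))
      ⟨k, Finset.mem_univ k, ?_⟩
    have hvk : v k ≠ 0 := fun h => hk (hx0 k h)
    exact mul_pos (inv_pos.mpr (lt_of_le_of_ne (hv k) hvk.symm)) (Complex.normSq_pos.mpr hk)
  rw [← hpair, Complex.im_mul_ofReal] at him
  rcases mul_eq_zero.mp him with h | h
  · simpa using h
  · exact absurd h hpos.ne'

/-- At an equilibrium `v`, all eigenvalues of `DF(v)`, viewed (after
complexification) as a linear endomorphism of `T_0Δ = {x : ∑ x_i = 0}`, are real. -/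
theorem eigenvalues_DF_real
    {N : ℕ} (hN : 2 ≤ N) {α : ℝ} (hα : 1 < α)
    (A : Matrix (Fin N) (Fin N) ℝ)
    (hsymm : ∀ i j, A i j = A j i)
    (hnonneg : ∀ i j, 0 ≤ A i j)
    (hoffdiag : ∀ i j, i ≠ j → 0 < A i j)
    (hrow : ∀ i i', ∑ j, A i j = ∑ j, A i' j)
    (v : Fin N → ℝ) (hv : v ∈ simplexD A) (heq : Ffield A α v = 0) :
    ∀ (lam : ℂ) (x : Fin N → ℂ), x ≠ 0 → (∑ i, x i) = 0 →
      ((DFmat A α v).map (fun r => (r : ℂ))) *ᵥ x = lam • x → lam.im = 0 := by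
  obtain ⟨hv0, hv1, -⟩ := hv
  have hpi : ∀ i, v i ^ α * (∑ j, A i j * v j ^ α) / Hfun A α v = v i := fun i =>
    sub_eq_zero.mp (congrFun heq i)
  -- if `H v` were `0`, division by zero would make `π v`, hence `v`, vanish
  have hH : Hfun A α v ≠ 0 := by
    intro h
    have hz : ∀ i, v i = 0 := fun i => by rw [← hpi i, h, div_zero]
    simp [hz] at hv1
  have hpow : ∀ i, v i ^ α = v i * v i ^ (α - 1) := by
    intro i
    by_cases hi : v i = 0
    · rw [hi, Real.zero_rpow (by linarith), zero_mul]
    · rw [Real.rpow_sub_one hi]; field_simp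
  intro lam x hx hsum heig
  refine im_eq_zero_of_eigen (α := α) (c := 2 * α) (DFmat A α v)
    (fun i j => α * v i ^ (α - 1) * v j ^ (α - 1) * A i j / Hfun A α v) ?_ v
    (fun i => v i ^ (α - 1) * (∑ j, A i j * v j ^ α) / Hfun A α v) hv0 ?_ ?_ ?_ lam x hx hsum heig
  · intro i j
    rw [hsymm i j]; ring
  · intro i hi
    rw [hi, Real.zero_rpow (by linarith), zero_mul, zero_div]
  · intro i hi
    have h := hpi i
    rw [hpow i] at h
    refine mul_left_cancel₀ hi ?_
    rw [mul_one]
    refine Eq.trans ?_ h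
    ring
  · intro i j
    rw [DFmat_apply hα A hsymm v hH i j, hpi i, hpow i]
    by_cases hij : i = j
    · simp only [hij, if_true]; ring
    · simp only [hij, if_false]; ring
end
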